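/- If A ⊆ Z is definable in (Z,+,<,0), then either A is definable in (Z,+,0), or ℕ is definable in (Z,+,0,A). -/

import Mathlib

open FirstOrder

/-- Function symbols of the language of `(ℤ,+,0)`: one constant (`0`) and one binary function
(`+`). -/
def grpFunc : ℕ → Type
  | 0 => Unit
  | 2 => Unit
  | _ => Empty

/-- The language of `(ℤ,+,0)`. -/
def LangGrp : FirstOrder.Language := ⟨grpFunc, fun _ => Empty⟩

noncomputable instance : LangGrp.Structure ℤ where
  funMap {n} f x :=
    match n, f with
    | 0, _ => 0
    | 2, _ => x 0 + x 1
  RelMap {n} r _ := r.elim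

/-- The language of `(ℤ,+,<,0)`. -/
def LangOrdGrp : FirstOrder.Language := LangGrp.sum FirstOrder.Language.order

noncomputable instance : FirstOrder.Language.order.Structure ℤ :=
  FirstOrder.Language.orderStructure ℤ

noncomputable instance : LangOrdGrp.Structure ℤ :=
  inferInstanceAs ((LangGrp.sum FirstOrder.Language.order).Structure ℤ)

/-- Presburger sets: subsets of `ℤⁿ` definable with parameters in `(ℤ,+,<,0)`. -/
def IsPresburger {n : ℕ} (s : Set ((Fin n) → ℤ)) : Prop :=
  Set.Definable (Set.univ : Set ℤ) LangOrdGrp s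

/-- Definability with parameters in `(ℤ,+,0)`. -/
def IsGroupDefinable {n : ℕ} (s : Set ((Fin n) → ℤ)) : Prop :=
  Set.Definable (Set.univ : Set ℤ) LangGrp s

/-- The language of `(ℤ,+,0,A)` with `A` an `n`-ary predicate. -/
def LangGrpRel (n : ℕ) : FirstOrder.Language :=
  ⟨grpFunc, fun m => if m = n then Unit else Empty⟩

/-- The structure `(ℤ,+,0,A)`. -/
noncomputable def relStructure {n : ℕ} (A : Set (Fin n → ℤ)) : (LangGrpRel n).Structure ℤ where
  funMap {m} f x :=
    match m, f with
    | 0, _ => 0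
    | 2, _ => x 0 + x 1
  RelMap {m} _ x := if h : m = n then (fun i : Fin n => x (Fin.cast h.symm i)) ∈ A else False

/-- `A ⊆ ℤⁿ` defines the ordering if `ℕ` (the set of nonnegative integers) is definable with
parameters in the expansion `(ℤ,+,0,A)`. -/
def DefinesOrdering {n : ℕ} (A : Set (Fin n → ℤ)) : Prop :=
  letI := relStructure A
  Set.Definable (Set.univ : Set ℤ) (LangGrpRel n) {f : Fin 1 → ℤ | 0 ≤ f 0}

/-- A subset of `ℤ` is Presburger if the corresponding unary set is definable in `(ℤ,+,<,0)`. -/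
def IsPresburger1 (A : Set ℤ) : Prop := IsPresburger {f : Fin 1 → ℤ | f 0 ∈ A}

/-- A subset of `ℤ` is definable in `(ℤ,+,0)`. -/
def IsGroupDefinable1 (A : Set ℤ) : Prop := IsGroupDefinable {f : Fin 1 → ℤ | f 0 ∈ A}

/-- A subset of `ℤ` defines the ordering. -/
def DefinesOrdering1 (A : Set ℤ) : Prop := DefinesOrdering {f : Fin 1 → ℤ | f 0 ∈ A}

section Helpers

open Set FirstOrder Language

/-! ### Presburger sets are semilinear -/

lemma ordGrp_term_affine {α : Type} (t : LangOrdGrp[[(Set.univ : Set ℤ)]].Term α) :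
    ∃ (k : ℤ) (f : (α → ℤ) →+ ℤ), ∀ v : α → ℤ, t.realize v = k + f v := by
  induction t with
  | var i => exact ⟨0, Pi.evalAddMonoidHom _ i, by simp⟩
  | @func l f ts ih =>
    choose k u ih using ih
    rcases f with f | f
    · rcases f with f | f
      · match l, f with
        | 0, f =>
          refine ⟨0, 0, fun v => ?_⟩
          rfl
        | 2, f =>
          refine ⟨k 0 + k 1, u 0 + u 1, fun v => ?_⟩
          have : (Term.func (Sum.inl (Sum.inl f)) ts :
              LangOrdGrp[[(Set.univ : Set ℤ)]].Term α).realize v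
              = (ts 0).realize v + (ts 1).realize v := rfl
          rw [this, ih, ih, AddMonoidHom.add_apply]
          ring
      · exact f.elim
    · match l, f with
      | 0, f =>
        refine ⟨f.1, 0, fun v => ?_⟩
        simp only [AddMonoidHom.zero_apply, add_zero]
        rfl

lemma int_isSemilinearSet_nonneg : IsSemilinearSet {z : ℤ | 0 ≤ z} := by
  have h := (IsSemilinearSet.univ (M := ℕ)).image (Nat.castAddMonoidHom ℤ)
  convert h using 1
  ext z
  constructor
  · intro hz
    exact ⟨z.toNat, trivial, by simpa using hz⟩
  · rintro ⟨n, -, rfl⟩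
    simp

lemma ordGrp_semilinear {α : Type} [Finite α] {n : ℕ}
    (φ : LangOrdGrp[[(Set.univ : Set ℤ)]].BoundedFormula α n) :
    IsSemilinearSet {v : α ⊕ Fin n → ℤ | φ.Realize (v ∘ Sum.inl) (v ∘ Sum.inr)} := by
  have := Fintype.ofFinite α
  induction φ with
  | equal t₁ t₂ =>
    obtain ⟨k₁, u₁, ht₁⟩ := ordGrp_term_affine t₁
    obtain ⟨k₂, u₂, ht₂⟩ := ordGrp_term_affine t₂
    convert isSemilinearSet_setOfPred_eq k₁ k₂ u₁ u₂ using 1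
    ext v
    simp [BoundedFormula.Realize, ht₁, ht₂]
  | @rel n l R ts =>
    rcases R with R | R
    · rcases R with R | R
      · exact R.elim
      · cases R
        obtain ⟨k₁, u₁, ht₁⟩ := ordGrp_term_affine (ts 0)
        obtain ⟨k₂, u₂, ht₂⟩ := ordGrp_term_affine (ts 1)
        convert (int_isSemilinearSet_nonneg.vadd (k₁ - k₂)).preimage (u₂ - u₁) using 1
        ext v
        have : (BoundedFormula.rel (Sum.inl (Sum.inr Language.orderRel.le)) ts :
            LangOrdGrp[[(Set.univ : Set ℤ)]].BoundedFormula α n).Realize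
              (v ∘ Sum.inl) (v ∘ Sum.inr) ↔
            (ts 0).realize (Sum.elim (v ∘ Sum.inl) (v ∘ Sum.inr)) ≤
            (ts 1).realize (Sum.elim (v ∘ Sum.inl) (v ∘ Sum.inr)) := Iff.rfl
        simp only [Set.mem_ofPred_eq, Set.mem_preimage, Set.mem_vadd_set]
        rw [this, ht₁, ht₂, Sum.elim_comp_inl_inr]
        simp only [AddMonoidHom.sub_apply, vadd_eq_add]
        constructor
        · intro h
          exact ⟨u₂ v - u₁ v - (k₁ - k₂), by linarith, by ring⟩
        · rintro ⟨y, hy, h⟩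
          linarith
    · exact R.elim
  | falsum => exact .empty
  | imp _ _ ih₁ ih₂ =>
    convert (ih₂.compl.inter ih₁).compl using 1
    ext v
    simp [BoundedFormula.Realize, imp_iff_not_or, or_comm]
  | @all n φ ih =>
    let e := (Equiv.sumAssoc α (Fin n) (Fin 1)).trans (Equiv.sumCongr (.refl α) finSumFinEquiv)
    rw [← isSemilinearSet_image_iff (LinearEquiv.funCongrLeft ℤ ℤ e)] at ih
    convert ih.compl.proj.compl using 1
    simp only [BoundedFormula.Realize]
    simp_rw [compl_ofPred, not_exists, Fin.forall_fin_succ_pi, Fin.forall_fin_zero_pi,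
      mem_compl_iff, mem_image, not_not, ← LinearEquiv.eq_symm_apply, LinearEquiv.funCongrLeft_symm,
      exists_eq_right, mem_ofPred, LinearEquiv.funCongrLeft_apply, LinearMap.funLeft,
      LinearMap.coe_mk, AddHom.coe_mk]
    congr! 4
    ext i
    cases i using Fin.lastCases <;> simp [e]

lemma presburger1_semilinear {A : Set ℤ} (hA : IsPresburger1 A) : IsSemilinearSet A := by
  obtain ⟨φ, hφ⟩ := hA
  let g : (Fin 1 ⊕ Fin 0 → ℤ) →+ ℤ := Pi.evalAddMonoidHom _ (Sum.inl 0)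
  convert (ordGrp_semilinear φ).image g using 1
  have key : ∀ f : Fin 1 → ℤ, f 0 ∈ A ↔ φ.Realize f := fun f => by
    have := Set.ext_iff.1 hφ f
    simpa using this
  ext x
  constructor
  · intro hx
    refine ⟨Sum.elim (fun _ => x) Fin.elim0, ?_, rfl⟩
    have := (key (fun _ => x)).1 hx
    simp only [Set.mem_ofPred_eq]
    rw [Sum.elim_comp_inl, Sum.elim_comp_inr]
    unfold Formula.Realize at this
    convert this using 1
  · rintro ⟨v, hv, rfl⟩
    refine (key (v ∘ Sum.inl)).2 ?_
    simp only [Set.mem_ofPred_eq] at hv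
    unfold Formula.Realize
    convert hv using 1

/-- Eventual periodicity in both directions. -/
lemma presburger1_periodic {A : Set ℤ} (hA : IsPresburger1 A) :
    ∃ m N : ℤ, 0 < m ∧ 0 ≤ N ∧
      (∀ x y, N ≤ x → N ≤ y → m ∣ y - x → (x ∈ A ↔ y ∈ A)) ∧
      (∀ x y, x ≤ -N → y ≤ -N → m ∣ y - x → (x ∈ A ↔ y ∈ A)) := by
  have hs := presburger1_semilinear hA
  obtain ⟨k₁, p₁, hp₁, h₁⟩ := Nat.isSemilinearSet_iff_ultimately_periodic.1
    (hs.preimage (Nat.castAddMonoidHom ℤ))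
  obtain ⟨k₂, p₂, hp₂, h₂⟩ := Nat.isSemilinearSet_iff_ultimately_periodic.1
    (hs.preimage (-(Nat.castAddMonoidHom ℤ)))
  simp only [Set.mem_preimage, Nat.coe_castAddMonoidHom, AddMonoidHom.neg_apply] at h₁ h₂
  have H₁ : ∀ (j x : ℕ), k₁ ≤ x → (((x : ℕ) : ℤ) ∈ A ↔ ((x + j * p₁ : ℕ) : ℤ) ∈ A) := by
    intro j
    induction j with
    | zero => simp
    | succ j ih =>
      intro x hx
      rw [ih x hx, h₁ (x + j * p₁) (by omega)]
      rw [show x + j * p₁ + p₁ = x + (j + 1) * p₁ by ring]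
  have H₂ : ∀ (j x : ℕ), k₂ ≤ x → (-((x : ℕ) : ℤ) ∈ A ↔ -((x + j * p₂ : ℕ) : ℤ) ∈ A) := by
    intro j
    induction j with
    | zero => simp
    | succ j ih =>
      intro x hx
      rw [ih x hx, h₂ (x + j * p₂) (by omega)]
      rw [show x + j * p₂ + p₂ = x + (j + 1) * p₂ by ring]
  have hm : (0 : ℤ) < (p₁ : ℤ) * p₂ := by positivity
  refine ⟨(p₁ : ℤ) * p₂, k₁ + k₂, hm, by positivity, ?_, ?_⟩
  · have main : ∀ x y : ℤ, (k₁ + k₂ : ℤ) ≤ x → x ≤ y → (p₁ : ℤ) * p₂ ∣ y - x →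
        (x ∈ A ↔ y ∈ A) := by
      rintro x y hx hxy ⟨c, hc⟩
      have hc0 : 0 ≤ c := by
        by_contra hneg
        have : (p₁ : ℤ) * p₂ * c < 0 := mul_neg_of_pos_of_neg hm (by omega)
        omega
      lift x to ℕ using by omega
      lift c to ℕ using hc0
      have := H₁ (p₂ * c) x (by omega)
      rw [this]
      have hy : y = ((x + p₂ * c * p₁ : ℕ) : ℤ) := by
        push_cast
        linear_combination hc
      rw [hy]
    intro x y hx hy hd
    rcases le_total x y with h | h
    · exact main x y hx h hd
    · exact (main y x hy h (by rw [← neg_sub]; exact hd.neg_right)).symm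
  · have main : ∀ x y : ℤ, x ≤ -(k₁ + k₂ : ℤ) → y ≤ x → (p₁ : ℤ) * p₂ ∣ y - x →
        (x ∈ A ↔ y ∈ A) := by
      rintro x y hx hxy ⟨c, hc⟩
      have hc0 : c ≤ 0 := by
        by_contra hneg
        have : 0 < (p₁ : ℤ) * p₂ * c := mul_pos hm (by omega)
        omega
      obtain ⟨x, rfl⟩ : ∃ z : ℤ, x = -z := ⟨-x, by ring⟩
      obtain ⟨c, rfl⟩ : ∃ z : ℤ, c = -z := ⟨-c, by ring⟩
      lift x to ℕ using by omega
      lift c to ℕ using by omega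
      have := H₂ (p₁ * c) x (by omega)
      rw [this]
      have hy : y = -((x + p₁ * c * p₂ : ℕ) : ℤ) := by
        push_cast
        linear_combination hc
      rw [hy]
    intro x y hx hy hd
    rcases le_total y x with h | h
    · exact main x y hx h hd
    · exact (main y x hy h (by rw [← neg_sub]; exact hd.neg_right)).symm

/-! ### Definability with parameters in expansions of the additive group of integers -/

section Generic

variable {L : FirstOrder.Language.{0, 0}} [L.Structure ℤ]

lemma exists_affine_term (add : L.Functions 2)
    (hadd : ∀ x : Fin 2 → ℤ, Structure.funMap add x = x 0 + x 1)
    {α : Type} (i : α) (m : ℕ) (r : ℤ) :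
    ∃ t : L[[(Set.univ : Set ℤ)]].Term α, ∀ v : α → ℤ, t.realize v = m * v i + r := by
  induction m with
  | zero => exact ⟨(L.con (⟨r, trivial⟩ : (Set.univ : Set ℤ))).term, by simp⟩
  | succ m ih =>
    obtain ⟨t, ht⟩ := ih
    refine ⟨Term.func (Sum.inl add) ![Term.var i, t], fun v => ?_⟩
    have h : (Term.func (Sum.inl add) ![Term.var i, t] :
        L[[(Set.univ : Set ℤ)]].Term α).realize v = v i + t.realize v :=
      hadd _
    rw [h, ht]
    push_cast
    ring

lemma definable_finite {F : Set ℤ} (hF : F.Finite) :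
    (Set.univ : Set ℤ).Definable L {f : Fin 1 → ℤ | f 0 ∈ F} := by
  have := definable_biUnion_finset (A := (Set.univ : Set ℤ)) (L := L)
    (f := fun a : ℤ => {f : Fin 1 → ℤ | f 0 ∈ ({a} : Set ℤ)})
    (fun a => Definable.singleton_of_mem L (Set.mem_univ a)) hF.toFinset
  convert this using 1
  ext f
  simp

lemma definable_of_finite_change {D E : Set ℤ} (a b : ℤ)
    (h : ∀ x, (x < a ∨ b < x) → (x ∈ D ↔ x ∈ E))
    (hD : (Set.univ : Set ℤ).Definable L {f : Fin 1 → ℤ | f 0 ∈ D}) :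
    (Set.univ : Set ℤ).Definable L {f : Fin 1 → ℤ | f 0 ∈ E} := by
  have h1 : (D \ E).Finite := (Set.finite_Icc a b).subset fun x hx => by
    by_contra hc
    simp only [Set.mem_Icc, not_and_or, not_le] at hc
    exact hx.2 ((h x hc).1 hx.1)
  have h2 : (E \ D).Finite := (Set.finite_Icc a b).subset fun x hx => by
    by_contra hc
    simp only [Set.mem_Icc, not_and_or, not_le] at hc
    exact hx.2 ((h x hc).2 hx.1)
  convert (hD.sdiff (definable_finite (L := L) h1)).union (definable_finite (L := L) h2) using 1
  ext f
  simp only [Set.mem_ofPred_eq, Set.mem_union, Set.mem_sdiff]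
  tauto

lemma definable_progression (add : L.Functions 2)
    (hadd : ∀ x : Fin 2 → ℤ, Structure.funMap add x = x 0 + x 1) (m : ℕ) (r : ℤ) :
    (Set.univ : Set ℤ).Definable L {f : Fin 1 → ℤ | ∃ y : ℤ, f 0 = m * y + r} := by
  obtain ⟨t, ht⟩ := exists_affine_term add hadd (Sum.inr 0 : Fin 1 ⊕ Fin 1) m r
  have : (Set.univ : Set ℤ).Definable L
      {v : Fin 1 ⊕ Fin 1 → ℤ | v (Sum.inl 0) = m * v (Sum.inr 0) + r} := by
    refine ⟨(Term.var (Sum.inl 0)).equal t, ?_⟩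
    ext v
    simp [ht]
  convert this.exists_of_finite using 1
  ext f
  constructor
  · rintro ⟨y, hy⟩
    exact ⟨fun _ => y, by simpa using hy⟩
  · rintro ⟨u, hu⟩
    exact ⟨u 0, by simpa using hu⟩

end Generic

end Helpers

/-- every Presburger subset of `ℤ` is definable in `(ℤ,+,0)` or defines the
ordering. -/
theorem stmt2 (A : Set ℤ) (hA : IsPresburger1 A) :
    IsGroupDefinable1 A ∨ DefinesOrdering1 A := by
  obtain ⟨m, N, hm, hN, hpos, hneg⟩ := presburger1_periodic hA
  lift m to ℕ using hm.le
  let D : Set ℤ := {x | ∃ y, N ≤ y ∧ (m : ℤ) ∣ y - x ∧ y ∈ A}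
  have hDper : ∀ x y, (m : ℤ) ∣ y - x → x ∈ D → y ∈ D := by
    rintro x y hxy ⟨z, hz, hd, hzA⟩
    exact ⟨z, hz, by have := dvd_sub hd hxy; rwa [sub_sub_sub_cancel_right] at this, hzA⟩
  have hDpos : ∀ x, N ≤ x → (x ∈ D ↔ x ∈ A) := by
    intro x hx
    constructor
    · rintro ⟨y, hy, hd, hyA⟩
      exact (hpos x y hx hy hd).2 hyA
    · intro h
      exact ⟨x, hx, by simp, h⟩
  by_cases hcase : ∀ x, x ≤ -N → (x ∈ D ↔ x ∈ A)
  · left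
    refine definable_of_finite_change (L := LangGrp) (D := D) (-N) N ?_ ?_
    · rintro x (hx | hx)
      · exact hcase x hx.le
      · exact hDpos x hx.le
    · classical
      have := Set.definable_biUnion_finset (A := (Set.univ : Set ℤ)) (L := LangGrp)
        (fun r : ℕ => definable_progression (L := LangGrp) (show LangGrp.Functions 2 from ())
          (fun x => rfl) m (r : ℤ)) ((Finset.range m).filter fun r => (r : ℤ) ∈ D)
      convert this using 1
      ext f
      simp only [Set.mem_ofPred_eq, Set.mem_iUnion, Finset.mem_filter, Finset.mem_range]
      constructor
      · intro hf
        have h0 : 0 ≤ f 0 % (m : ℤ) := Int.emod_nonneg _ hm.ne'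
        have h1 : f 0 % (m : ℤ) < m := Int.emod_lt_of_pos _ hm
        have h2 := Int.mul_ediv_add_emod (f 0) m
        refine ⟨(f 0 % (m : ℤ)).toNat, ⟨by omega, ?_⟩, f 0 / m, ?_⟩
        · rw [Int.toNat_of_nonneg h0]
          refine hDper (f 0) _ ⟨-(f 0 / m), ?_⟩ hf
          linarith
        · rw [Int.toNat_of_nonneg h0, h2]
      · rintro ⟨r, ⟨-, hr⟩, y, hy⟩
        exact hDper r _ ⟨y, by rw [hy]; ring⟩ hr
  · right
    push Not at hcase
    obtain ⟨x₀, hx₀, hne⟩ := hcase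
    letI := relStructure {f : Fin 1 → ℤ | f 0 ∈ A}
    have hB : (Set.univ : Set ℤ).Definable (LangGrpRel 1)
        {f : Fin 1 → ℤ | f 0 ∈ {z : ℤ | (m : ℤ) * z + x₀ ∈ A}} := by
      obtain ⟨t, ht⟩ := exists_affine_term (L := LangGrpRel 1)
        (show (LangGrpRel 1).Functions 2 from ()) (fun x => rfl) (0 : Fin 1) m x₀
      let R : (LangGrpRel 1).Relations 1 := show (if 1 = 1 then Unit else Empty) from by
        rw [if_pos rfl]; exact ()
      let R' : (LangGrpRel 1)[[(Set.univ : Set ℤ)]].Relations 1 := Sum.inl R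
      refine ⟨R'.formula₁ t, ?_⟩
      ext f
      have : (R'.formula₁ t).Realize f ↔ t.realize f ∈ A := by
        rw [FirstOrder.Language.Formula.realize_rel₁]
        change (if h : 1 = 1 then _ else False) ↔ _
        rw [dif_pos rfl]
        exact Iff.rfl
      simp only [Set.mem_ofPred_eq]
      rw [this, ht]
    have hlow : ∀ z : ℤ, z < 0 → ((m : ℤ) * z + x₀ ∈ A ↔ x₀ ∈ A) := by
      intro z hz
      have : (m : ℤ) * z < 0 := mul_neg_of_pos_of_neg hm hz
      exact hneg _ _ (by linarith) hx₀ ⟨-z, by ring⟩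
    have hhigh : ∀ z : ℤ, N - x₀ < z → ((m : ℤ) * z + x₀ ∈ A ↔ x₀ ∈ D) := by
      intro z hz
      have h1 : (1 : ℤ) ≤ m := hm
      have h2 : z ≤ (m : ℤ) * z := by nlinarith
      rw [← hDpos _ (by linarith)]
      exact ⟨hDper _ _ ⟨-z, by ring⟩, hDper _ _ ⟨z, by ring⟩⟩
    rcases hne with ⟨hD, hnA⟩ | ⟨hnD, hA'⟩
    · refine definable_of_finite_change (L := LangGrpRel 1) (E := {z : ℤ | 0 ≤ z})
        0 (N - x₀) ?_ hB
      rintro z (hz | hz)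
      · simp only [Set.mem_ofPred_eq, hlow z hz]
        exact ⟨fun h => absurd h hnA, fun h => absurd h (by omega)⟩
      · simp only [Set.mem_ofPred_eq, hhigh z hz]
        exact ⟨fun _ => by omega, fun _ => hD⟩
    · refine definable_of_finite_change (L := LangGrpRel 1) (E := {z : ℤ | 0 ≤ z})
        (D := {z : ℤ | (m : ℤ) * z + x₀ ∈ A}ᶜ) 0 (N - x₀) ?_ hB.compl
      rintro z (hz | hz)
      · simp only [Set.mem_compl_iff, Set.mem_ofPred_eq, hlow z hz]
        exact ⟨fun h => absurd hA' h, fun h => absurd h (by omega)⟩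
      · simp only [Set.mem_compl_iff, Set.mem_ofPred_eq, hhigh z hz]
        exact ⟨fun _ => by omega, fun _ => hnD⟩
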